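/- arXiv:2312.09617 — 2 statements merged into one kernel-verified Lean document; each statement's English description precedes it below -/
import Mathlib

section
/- Let λ ≥ 1 be real and let f belong to the class S*_{Σ,q}(λ;φ). Then the third Maclaurin coefficient of f is a₃ = E₁(c₂ − d₂)/(4(λ[3]_q − 1)) + E₁²c₁²/(4λ²([2]_q)²). -/
open Complex Metric Set

noncomputable def symQ (q x : ℝ) : ℝ := (Real.rpow q x - Real.rpow q (-x)) / (q - q⁻¹)

noncomputable def Dq (q : ℝ) (f : ℂ → ℂ) (z : ℂ) : ℂ :=
  if z = 0 then deriv f 0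
  else (f ((q : ℂ) * z) - f (z / (q : ℂ))) / (((q : ℂ) - (q : ℂ)⁻¹) * z)

def IsSchwarz (u : ℂ → ℂ) : Prop :=
  AnalyticOnNhd ℂ u (ball 0 1) ∧ u 0 = 0 ∧ ∀ z ∈ ball (0 : ℂ) 1, u z ∈ ball (0 : ℂ) 1

open Asymptotics Filter Topology

def T3 (h : ℂ → ℂ) (b0 b1 b2 : ℂ) : Prop :=
  (fun z => h z - (b0 + b1 * z + b2 * z ^ 2)) =O[𝓝 0] fun z : ℂ => z ^ 3

lemma T3.congr {h k : ℂ → ℂ} {a b c : ℂ} (H : T3 h a b c) (e : ∀ᶠ z in 𝓝 0, h z = k z) :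
    T3 k a b c := by
  refine IsBigO.congr' H ?_ EventuallyEq.rfl
  filter_upwards [e] with z hz
  rw [hz]

lemma T3.add {h k : ℂ → ℂ} {a b c a' b' c' : ℂ} (H : T3 h a b c) (K : T3 k a' b' c') :
    T3 (fun z => h z + k z) (a + a') (b + b') (c + c') := by
  refine (IsBigO.add H K).congr_left ?_
  intro z; ring

lemma T3.const_mul {h : ℂ → ℂ} {a b c : ℂ} (H : T3 h a b c) (s : ℂ) :
    T3 (fun z => s * h z) (s * a) (s * b) (s * c) := by
  refine (IsBigO.const_mul_left H s).congr_left ?_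
  intro z; ring

lemma T3.sub {h k : ℂ → ℂ} {a b c a' b' c' : ℂ} (H : T3 h a b c) (K : T3 k a' b' c') :
    T3 (fun z => h z - k z) (a - a') (b - b') (c - c') := by
  refine (IsBigO.sub H K).congr_left ?_
  intro z; ring

lemma T3.poly (a b c : ℂ) : T3 (fun z => a + b * z + c * z ^ 2) a b c := by
  simpa [T3] using isBigO_zero (fun z : ℂ => z ^ 3) (𝓝 0)

lemma T3.const (a : ℂ) : T3 (fun _ => a) a 0 0 := by simpa using T3.poly a 0 0

lemma T3.scale {h : ℂ → ℂ} {a b c : ℂ} (H : T3 h a b c) (s : ℂ) :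
    T3 (fun z => h (s * z)) a (b * s) (c * s ^ 2) := by
  have ht : Tendsto (fun z : ℂ => s * z) (𝓝 0) (𝓝 0) := by
    have : ContinuousAt (fun z : ℂ => s * z) 0 := by fun_prop
    simpa [ContinuousAt] using this
  have h1 := IsBigO.comp_tendsto H ht
  have h2 : (fun z : ℂ => (s * z) ^ 3) =O[𝓝 0] fun z : ℂ => z ^ 3 := by
    simp only [mul_pow]
    exact (isBigO_refl _ _).const_mul_left _
  refine (h1.trans h2).congr_left ?_
  intro z; simp only [Function.comp]; ring

lemma cont_bdd {p : ℂ → ℂ} (hp : ContinuousAt p 0) : p =O[𝓝 0] fun _ : ℂ => (1 : ℂ) :=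
  hp.tendsto.isBigO_one ℂ

lemma z3_small : (fun z : ℂ => z ^ 3) =O[𝓝 0] fun z : ℂ => z := by
  have := (cont_bdd (p := fun z => z ^ 2) (by fun_prop)).mul (isBigO_refl (fun z : ℂ => z) (𝓝 0))
  refine this.congr ?_ ?_ <;> intro z <;> ring

lemma T3.bdd {h : ℂ → ℂ} {a b c : ℂ} (H : T3 h a b c) : h =O[𝓝 0] fun _ : ℂ => (1 : ℂ) := by
  have h1 := (cont_bdd (p := fun z => z ^ 3) (by fun_prop))
  have h2 := (cont_bdd (p := fun z => a + b * z + c * z ^ 2) (by fun_prop))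
  refine ((IsBigO.trans H h1).add h2).congr_left ?_
  intro z; ring

lemma T3.lin {h : ℂ → ℂ} {b c : ℂ} (H : T3 h 0 b c) : h =O[𝓝 0] fun z : ℂ => z := by
  have h2 := (cont_bdd (p := fun z => b + c * z) (by fun_prop)).mul
    (isBigO_refl (fun z : ℂ => z) (𝓝 0))
  simp only [one_mul] at h2
  refine ((IsBigO.trans H z3_small).add h2).congr_left ?_
  intro z; ring

lemma T3.mul {h k : ℂ → ℂ} {a b c a' b' c' : ℂ} (H : T3 h a b c) (K : T3 k a' b' c') :
    T3 (fun z => h z * k z) (a * a') (a * b' + b * a') (a * c' + b * b' + c * a') := by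
  have h1 := IsBigO.mul H K.bdd
  have h2 := (cont_bdd (p := fun z => a + b * z + c * z ^ 2) (by fun_prop)).mul K
  have h3 := (cont_bdd (p := fun z => b * c' + c * b' + c * c' * z) (by fun_prop)).mul
    (isBigO_refl (fun z : ℂ => z ^ 3) (𝓝 0))
  simp only [one_mul, mul_one] at h1 h2 h3
  refine ((h1.add h2).add h3).congr_left ?_
  intro z; ring

lemma T3.comp {h k : ℂ → ℂ} {a b c b' c' : ℂ} (H : T3 h a b c) (K : T3 k 0 b' c') :
    T3 (fun z => h (k z)) a (b * b') (b * c' + c * b' ^ 2) := by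
  have ht : Tendsto k (𝓝 0) (𝓝 0) := K.lin.trans_tendsto tendsto_id
  have h1 : T3 (fun z => h (k z) - (a + b * k z + c * k z ^ 2)) 0 0 0 := by
    have := (IsBigO.comp_tendsto H ht).trans (K.lin.pow 3)
    simpa [T3, Function.comp_def] using this
  have h2 := h1.add (((T3.const a).add (K.const_mul b)).add ((K.mul K).const_mul c))
  have h3 := h2.congr (k := fun z => h (k z)) (Eventually.of_forall fun z => by ring)
  convert h3 using 1 <;> ring

lemma T3.unique {h : ℂ → ℂ} {a b c a' b' c' : ℂ} (H : T3 h a b c) (K : T3 h a' b' c') :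
    a = a' ∧ b = b' ∧ c = c' := by
  have L := H.sub K
  have L1 : (fun z : ℂ => (a - a') + (b - b') * z + (c - c') * z ^ 2) =O[𝓝[≠] 0]
      fun z : ℂ => z ^ 3 := by
    have : (fun z : ℂ => (a - a') + (b - b') * z + (c - c') * z ^ 2) =O[𝓝 0]
      fun z : ℂ => z ^ 3 := by
      refine L.neg_left.congr_left ?_
      intro z; ring
    exact this.mono nhdsWithin_le_nhds
  have key : ∀ (p : ℂ → ℂ) (n : ℕ), ContinuousAt p 0 →
      p =O[𝓝[≠] 0] (fun z : ℂ => z ^ (n + 1)) → p 0 = 0 := by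
    intro p n hp ho
    have t1 : Tendsto p (𝓝[≠] 0) (𝓝 (p 0)) := hp.tendsto.mono_left nhdsWithin_le_nhds
    have t2 : Tendsto p (𝓝[≠] 0) (𝓝 0) := by
      refine ho.trans_tendsto ?_
      have : ContinuousAt (fun z : ℂ => z ^ (n + 1)) 0 := by fun_prop
      have := this.tendsto
      simp only [ne_eq, Nat.add_eq_zero_iff, one_ne_zero, and_false, not_false_eq_true,
        zero_pow] at this
      exact this.mono_left nhdsWithin_le_nhds
    exact tendsto_nhds_unique t1 t2
  have div : ∀ (p r : ℂ → ℂ) (n : ℕ), (∀ z, p z = z * r z) →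
      p =O[𝓝[≠] 0] (fun z : ℂ => z ^ (n + 1)) → r =O[𝓝[≠] 0] (fun z : ℂ => z ^ n) := by
    intro p r n e ho
    have := (isBigO_refl (fun z : ℂ => z⁻¹) (𝓝[≠] 0)).mul ho
    refine this.congr' ?_ ?_
    · filter_upwards [self_mem_nhdsWithin] with z hz
      rw [e, inv_mul_cancel_left₀ hz]
    · filter_upwards [self_mem_nhdsWithin] with z hz
      rw [pow_succ', inv_mul_cancel_left₀ hz]
  have z0 : a - a' = 0 := by simpa using key _ 2 (by fun_prop) L1
  rw [z0] at L1
  have L2 := div _ (fun z => (b - b') + (c - c') * z) 2 (fun z => by ring) L1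
  have z1 : b - b' = 0 := by simpa using key _ 1 (by fun_prop) L2
  rw [z1] at L2
  have L3 := div _ (fun z => (c - c')) 1 (fun z => by ring) L2
  have z2 : c - c' = 0 := key _ 0 (by fun_prop) L3
  exact ⟨sub_eq_zero.1 z0, sub_eq_zero.1 z1, sub_eq_zero.1 z2⟩

lemma T3.of_series {h : ℂ → ℂ} {p : FormalMultilinearSeries ℂ ℂ ℂ}
    (H : HasFPowerSeriesAt h p 0) : T3 h (p.coeff 0) (p.coeff 1) (p.coeff 2) := by
  have := H.isBigO_sub_partialSum_pow 3
  have h2 := this.trans (g := fun y : ℂ => ‖y‖ ^ 3) (isBigO_refl _ _)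
  refine IsBigO.of_norm_right (h2.congr ?_ ?_)
  · intro z
    simp [FormalMultilinearSeries.partialSum, Finset.sum_range_succ]
    ring
  · intro z; simp

lemma T3.of_analytic {h : ℂ → ℂ} (H : AnalyticAt ℂ h 0) : ∃ k, T3 h (h 0) (deriv h 0) k := by
  obtain ⟨p, hp⟩ := H
  have := T3.of_series hp
  refine ⟨p.coeff 2, ?_⟩
  have h1 : h 0 = p.coeff 0 := by simpa using (hp.coeff_zero ![]).symm
  have h2 : deriv h 0 = p.coeff 1 := by simpa using hp.deriv
  rwa [h1, h2]

lemma series_of_tsum {h : ℂ → ℂ} {b : ℕ → ℂ} (H : ∀ z ∈ ball (0 : ℂ) 1, h z = ∑' n, b n * z ^ n)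
    (hne : ∀ z ∈ ball (0 : ℂ) 1, z ≠ 0 → h z ≠ 0) :
    HasFPowerSeriesAt h (FormalMultilinearSeries.ofScalars ℂ b) 0 := by
  have hs : ∀ z ∈ ball (0 : ℂ) 1, HasSum (fun n => b n * z ^ n) (h z) := by
    intro z hz
    rw [H z hz]
    by_cases h0 : z = 0
    · subst h0
      exact (summable_of_ne_finset_zero (s := {0}) (by
        intro n hn
        have : n ≠ 0 := by simpa using hn
        simp [this])).hasSum
    · by_contra hc
      have : ¬ Summable (fun n => b n * z ^ n) := fun h => hc h.hasSum
      exact hne z hz h0 (by rw [H z hz, tsum_eq_zero_of_not_summable this])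
  rw [hasFPowerSeriesAt_iff]
  filter_upwards [ball_mem_nhds (0 : ℂ) one_pos] with z hz
  simpa [FormalMultilinearSeries.coeff_ofScalars, mul_comm] using hs z hz

lemma cpow_T3 (l : ℂ) : ∃ k, T3 (fun x => (1 + x) ^ l) 1 l k := by
  have hm : (1 : ℂ) + 0 ∈ slitPlane := by simp
  have hd : HasDerivAt (fun x : ℂ => (1 + x) ^ l) (l * (1 + 0) ^ (l - 1) * 1) 0 :=
    ((hasDerivAt_id (0 : ℂ)).const_add 1).cpow_const hm
  have ha : AnalyticAt ℂ (fun x : ℂ => (1 + x) ^ l) 0 :=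
    (analyticAt_const.add analyticAt_id).cpow analyticAt_const hm
  obtain ⟨k, hk⟩ := T3.of_analytic ha
  refine ⟨k, ?_⟩
  rw [hd.deriv] at hk
  simpa using hk

lemma dslope_T3 {f : ℂ → ℂ} {p : FormalMultilinearSeries ℂ ℂ ℂ}
    (H : HasFPowerSeriesAt f p 0) : T3 (dslope f 0) (p.coeff 1) (p.coeff 2) (p.coeff 3) := by
  simpa using T3.of_series H.has_fpower_series_dslope_fslope

lemma dslope_mul {f : ℂ → ℂ} (h0 : f 0 = 0) (z : ℂ) : f z = z * dslope f 0 z := by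
  have := sub_smul_dslope f 0 z
  simp [h0] at this
  exact this.symm

lemma tendsto_mul0 (s : ℂ) : Tendsto (fun z : ℂ => s * z) (𝓝 0) (𝓝 0) := by
  have : ContinuousAt (fun z : ℂ => s * z) 0 := by fun_prop
  simpa [ContinuousAt] using this

lemma side {q : ℝ} (hq0 : 0 < q) (hq1 : q < 1) {f φ u : ℂ → ℂ} {l k b c e1 e2 u1 u2 : ℂ}
    (h0 : f 0 = 0) (hinj : InjOn f (ball 0 1)) (hfd : T3 (dslope f 0) 1 b c)
    (hd1 : deriv f 0 = 1)
    (hφ : T3 φ 1 e1 e2) (hφ0 : φ 0 = 1) (hu0 : u 0 = 0) (hu : T3 u 0 u1 u2)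
    (hl : T3 (fun x => (1 + x) ^ l) 1 l k)
    (hsub : ∀ z ∈ ball (0 : ℂ) 1, z ≠ 0 →
      2 * z * Dq q f z ^ l / (f z - f (-z)) = φ (u z)) :
    l * ((q : ℂ) + (q : ℂ)⁻¹) * b = e1 * u1 ∧
    l * ((q : ℂ) ^ 2 + 1 + (q : ℂ)⁻¹ ^ 2) * c + k * (((q : ℂ) + (q : ℂ)⁻¹) * b) ^ 2 =
      c + e1 * u2 + e2 * u1 ^ 2 := by
  have hqc : (q : ℂ) ≠ 0 := by exact_mod_cast hq0.ne'
  have hqq : (q : ℂ) - (q : ℂ)⁻¹ ≠ 0 := by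
    have : q - q⁻¹ ≠ 0 := by
      have := (one_lt_inv₀ hq0).2 hq1
      linarith
    exact_mod_cast this
  have hD : T3 (fun z => Dq q f z - 1) 0 (((q : ℂ) + (q : ℂ)⁻¹) * b)
      (((q : ℂ) ^ 2 + 1 + (q : ℂ)⁻¹ ^ 2) * c) := by
    have t := ((((hfd.scale q).const_mul q).sub
      ((hfd.scale (q : ℂ)⁻¹).const_mul (q : ℂ)⁻¹)).const_mul ((q : ℂ) - (q : ℂ)⁻¹)⁻¹).sub
        (T3.const 1)
    have t2 := t.congr (k := fun z => Dq q f z - 1) (Eventually.of_forall fun z => by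
      simp only [Dq]
      split_ifs with hz
      · subst hz
        simp only [mul_zero, dslope_same, hd1, mul_one]
        rw [inv_mul_cancel₀ hqq]
      · rw [dslope_mul h0 (q * z), dslope_mul h0 (z / q), div_eq_inv_mul z (q : ℂ)]
        congr 1
        generalize dslope f 0 (q * z) = A
        generalize dslope f 0 ((q : ℂ)⁻¹ * z) = B
        generalize (q : ℂ) - (q : ℂ)⁻¹ = C at *
        field_simp)
    have hqr : (q : ℂ) * (q : ℂ)⁻¹ = 1 := mul_inv_cancel₀ hqc
    generalize hr : (q : ℂ)⁻¹ = r at *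
    convert t2 using 1
    · field_simp; ring
    · field_simp; ring
    · field_simp
      linear_combination (r - q) * c * hqr
  have hDl := hl.comp hD
  have hF := ((hfd.add (hfd.scale (-1))).const_mul (2 : ℂ)⁻¹).mul (hφ.comp hu)
  have hE := hDl.congr (k := fun z => _) (by
    filter_upwards [ball_mem_nhds (0 : ℂ) one_pos] with z hz
    show _ = (2 : ℂ)⁻¹ * (dslope f 0 z + dslope f 0 (-1 * z)) * φ (u z)
    by_cases hz0 : z = 0
    · subst hz0
      simp [Dq, hd1, hu0, hφ0]
      norm_num
    · have hne : f z - f (-z) ≠ 0 := by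
        intro h
        have := hinj hz (by simpa using hz) (sub_eq_zero.1 h)
        exact hz0 (self_eq_neg.1 this)
      rw [← hsub z hz hz0]
      have e : f z - f (-z) = z * (dslope f 0 z + dslope f 0 (-1 * z)) := by
        rw [dslope_mul h0 z, dslope_mul h0 (-z)]; ring_nf
      rw [e] at hne ⊢
      have := right_ne_zero_of_mul hne
      rw [add_sub_cancel]
      generalize dslope f 0 z + dslope f 0 (-1 * z) = A at *
      field_simp)
  obtain ⟨-, r1, r2⟩ := hE.unique hF
  constructor
  · linear_combination r1
  · linear_combination r2

lemma inv_rel {f g : ℂ → ℂ} {a2 a3 g1 g2 g3 : ℂ} (hf0 : f 0 = 0) (hg0 : g 0 = 0)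
    (hf : T3 (dslope f 0) 1 a2 a3) (hg : T3 (dslope g 0) g1 g2 g3)
    (hd : deriv f 0 * deriv g 0 = 1)
    (h : ∀ᶠ z in 𝓝 (0 : ℂ), g (f z) = z) :
    g1 = 1 ∧ g2 = -a2 ∧ g3 = 2 * a2 ^ 2 - a3 := by
  have hff : T3 f 0 1 a2 := by
    have t := (T3.poly 0 1 0).mul hf
    have t2 := t.congr (k := f) (Eventually.of_forall fun z => by
      rw [dslope_mul hf0 z]; ring)
    convert t2 using 1 <;> ring
  have t := hf.mul (hg.comp hff)
  have t2 := t.congr (k := fun _ => 1) (by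
    filter_upwards [h] with z hz
    by_cases hz0 : z = 0
    · subst hz0; simp [hf0, hd]
    · rw [dslope_mul hg0 (f z), dslope_mul hf0 z] at hz
      rw [← dslope_mul hf0 z] at hz
      apply mul_left_cancel₀ hz0
      rw [dslope_mul hf0 z] at hz ⊢
      linear_combination hz)
  obtain ⟨r0, r1, r2⟩ := t2.unique (T3.const 1)
  have e1 : g1 = 1 := by linear_combination r0
  subst e1
  have e2 : g2 = -a2 := by linear_combination r1
  subst e2
  refine ⟨rfl, rfl, ?_⟩
  linear_combination r2

lemma schwarz_rel {u : ℂ → ℂ} {c : ℕ → ℂ} (hu : IsSchwarz u) (hc0 : c 0 = 1)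
    (hc : ∀ z ∈ ball (0 : ℂ) 1, (1 + u z) / (1 - u z) = ∑' n, c n * z ^ n) :
    T3 u 0 (c 1 / 2) (c 2 / 2 - c 1 ^ 2 / 4) := by
  obtain ⟨ha, h0, hb⟩ := hu
  have n1 : ∀ z ∈ ball (0 : ℂ) 1, 1 + u z ≠ 0 := by
    intro z hz h
    have := hb z hz
    rw [eq_neg_of_add_eq_zero_right h] at this
    simp at this
  have n2 : ∀ z ∈ ball (0 : ℂ) 1, 1 - u z ≠ 0 := by
    intro z hz h
    have := hb z hz
    rw [← sub_eq_zero.1 h] at this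
    simp at this
  have hC := T3.of_series (series_of_tsum hc fun z hz _ => div_ne_zero (n1 z hz) (n2 z hz))
  simp only [FormalMultilinearSeries.coeff_ofScalars, hc0] at hC
  obtain ⟨k, hk⟩ := T3.of_analytic (ha 0 (by simp))
  rw [h0] at hk
  have t := (((T3.const 1).sub hk).mul hC).congr (k := fun z => 1 + u z) (by
    filter_upwards [ball_mem_nhds (0 : ℂ) one_pos] with z hz
    have := n2 z hz
    field_simp)
  obtain ⟨-, r1, r2⟩ := t.unique ((T3.const 1).add hk)
  have e1 : deriv u 0 = c 1 / 2 := by linear_combination -r1 / 2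
  rw [e1] at hk r2
  have e2 : k = c 2 / 2 - c 1 ^ 2 / 4 := by linear_combination -r2 / 2
  rwa [e2] at hk

theorem coeff_a3_eq
    (q : ℝ) (hq0 : 0 < q) (hq1 : q < 1)
    (f g : ℂ → ℂ) (a : ℕ → ℂ)
    (hf : AnalyticOnNhd ℂ f (ball 0 1)) (hf0 : f 0 = 0) (hf'0 : deriv f 0 = 1)
    (hfa : ∀ z ∈ ball (0 : ℂ) 1, f z = ∑' n, a n * z ^ n)
    (ha0 : a 0 = 0) (ha1 : a 1 = 1)
    (hfinj : InjOn f (ball 0 1))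
    (hg : AnalyticOnNhd ℂ g (ball 0 1)) (hg0 : g 0 = 0)
    (hginj : InjOn g (ball 0 1))
    (hgf : ∀ᶠ z in nhds (0 : ℂ), g (f z) = z)
    (φ : ℂ → ℂ) (E : ℕ → ℂ) (E1 : ℝ)
    (hφa : AnalyticOnNhd ℂ φ (ball 0 1)) (hφ0 : φ 0 = 1)
    (hφre : ∀ z ∈ ball (0 : ℂ) 1, 0 < (φ z).re)
    (hφE : ∀ z ∈ ball (0 : ℂ) 1, φ z = ∑' n, E n * z ^ n)
    (hE0 : E 0 = 1) (hE1 : E 1 = (E1 : ℂ)) (hE1pos : 0 < E1)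
    (lam : ℝ) (hlam : 1 ≤ lam)
    (u v : ℂ → ℂ) (hu : IsSchwarz u) (hv : IsSchwarz v)
    (hsubf : ∀ z ∈ ball (0 : ℂ) 1, z ≠ 0 →
      2 * z * Dq q f z ^ (lam : ℂ) / (f z - f (-z)) = φ (u z))
    (hsubg : ∀ w ∈ ball (0 : ℂ) 1, w ≠ 0 →
      2 * w * Dq q g w ^ (lam : ℂ) / (g w - g (-w)) = φ (v w))
    (c d : ℕ → ℂ) (hc0 : c 0 = 1) (hd0 : d 0 = 1)
    (hc : ∀ z ∈ ball (0 : ℂ) 1, (1 + u z) / (1 - u z) = ∑' n, c n * z ^ n)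
    (hd : ∀ w ∈ ball (0 : ℂ) 1, (1 + v w) / (1 - v w) = ∑' n, d n * w ^ n)
    :
    a 3 = (E1 : ℂ) * (c 2 - d 2) / (4 * ((lam : ℂ) * (symQ q 3 : ℂ) - 1)) +
      (E1 : ℂ) ^ 2 * c 1 ^ 2 / (4 * (lam : ℂ) ^ 2 * (symQ q 2 : ℂ) ^ 2) := by
  have hfne : ∀ z ∈ ball (0 : ℂ) 1, z ≠ 0 → f z ≠ 0 := by
    intro z hz h0 h
    exact h0 (hfinj hz (by simp) (h.trans hf0.symm))
  have hfT := dslope_T3 (series_of_tsum hfa hfne)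
  simp only [FormalMultilinearSeries.coeff_ofScalars, ha1] at hfT
  have hφT := T3.of_series (series_of_tsum hφE fun z hz _ h => by
    have := hφre z hz
    rw [h] at this
    simp at this)
  simp only [FormalMultilinearSeries.coeff_ofScalars, hE0, hE1] at hφT
  obtain ⟨p, hp⟩ := hg 0 (by simp)
  have hgT := dslope_T3 hp
  have hfd : DifferentiableAt ℂ f 0 := (hf 0 (by simp)).differentiableAt
  have hgd : DifferentiableAt ℂ g 0 := (hg 0 (by simp)).differentiableAt
  have hgd1 : deriv g 0 = 1 := by
    have h1 : HasDerivAt (g ∘ f) (deriv g (f 0) * deriv f 0) 0 :=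
      HasDerivAt.comp 0 (by rw [hf0]; exact hgd.hasDerivAt) hfd.hasDerivAt
    have h2 : HasDerivAt (g ∘ f) 1 0 := (hasDerivAt_id (0 : ℂ)).congr_of_eventuallyEq hgf
    have := h1.unique h2
    rwa [hf0, hf'0, mul_one] at this
  obtain ⟨e1, e2, e3⟩ := inv_rel hf0 hg0 hfT hgT (by rw [hf'0, hgd1, one_mul]) hgf
  rw [e1, e2, e3] at hgT
  obtain ⟨k, hk⟩ := cpow_T3 (lam : ℂ)
  obtain ⟨r1, r2⟩ := side hq0 hq1 hf0 hfinj hfT hf'0 hφT hφ0 hu.2.1 (schwarz_rel hu hc0 hc) hk hsubf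
  obtain ⟨s1, s2⟩ := side hq0 hq1 hg0 hginj hgT hgd1 hφT hφ0 hv.2.1 (schwarz_rel hv hd0 hd) hk hsubg
  have hqr : q < q⁻¹ := hq1.trans ((one_lt_inv₀ hq0).2 hq1)
  have hqq : q - q⁻¹ ≠ 0 := by linarith
  have hqi : q * q⁻¹ = 1 := mul_inv_cancel₀ hq0.ne'
  have q2 : symQ q 2 = q + q⁻¹ := by
    have : ∀ x, Real.rpow q x = q ^ x := fun _ => rfl
    simp only [symQ, this]
    rw [Real.rpow_neg hq0.le, div_eq_iff hqq]
    norm_num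
    ring
  have q3 : symQ q 3 = q ^ 2 + 1 + q⁻¹ ^ 2 := by
    have : ∀ x, Real.rpow q x = q ^ x := fun _ => rfl
    have h3 : q ^ (3 : ℝ) = q ^ 3 := by exact_mod_cast Real.rpow_natCast q 3
    simp only [symQ, this]
    rw [Real.rpow_neg hq0.le, div_eq_iff hqq, h3, ← inv_pow]
    linear_combination (q - q⁻¹) * hqi
  have q2ne : (symQ q 2 : ℂ) ≠ 0 := by
    rw [q2]
    have : q + q⁻¹ ≠ 0 := by positivity
    exact_mod_cast this
  have lne : (lam : ℂ) ≠ 0 := by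
    have : lam ≠ 0 := by linarith
    exact_mod_cast this
  have q3ne : (lam : ℂ) * (symQ q 3 : ℂ) - 1 ≠ 0 := by
    have h1 : 0 < q ^ 2 + q⁻¹ ^ 2 := by positivity
    have : lam * symQ q 3 - 1 ≠ 0 := by
      rw [q3]; nlinarith
    exact_mod_cast this
  have E1ne : (E1 : ℂ) ≠ 0 := by exact_mod_cast hE1pos.ne'
  have q2c : (q : ℂ) + (q : ℂ)⁻¹ = symQ q 2 := by rw [q2]; push_cast; rfl
  have q3c : (q : ℂ) ^ 2 + 1 + (q : ℂ)⁻¹ ^ 2 = symQ q 3 := by rw [q3]; push_cast; rfl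
  rw [q2c] at r1 s1
  rw [q2c, q3c] at r2 s2
  generalize (symQ q 2 : ℂ) = Q2 at *
  generalize (symQ q 3 : ℂ) = Q3 at *
  have hdc : d 1 = - c 1 := by
    apply mul_left_cancel₀ E1ne
    linear_combination -2 * (r1 + s1)
  rw [hdc] at s2
  have ha2 : a 2 = E1 * c 1 / (2 * lam * Q2) := by
    field_simp
    linear_combination 2 * r1
  have key : a 3 = E1 * (c 2 - d 2) / (4 * (lam * Q3 - 1)) + a 2 ^ 2 := by
    field_simp
    linear_combination 2 * (r2 - s2)
  rw [key, ha2]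
  field_simp
  ring
end

section
/- Let μ ≥ 0 and λ ≥ 1 be real and let f belong to the class S*_{Σ,q}^η(μ,λ;φ). Then 2(λ[3]_q − 1)·M₃·L₃·(a₃ − a₂²) = (1/2)·E₁·(c₂ − d₂); moreover, if M₂ ≠ 0 and M₃ ≠ 0, then a₃ = E₁(c₂ − d₂)/(4(λ[3]_q − 1)·M₃·L₃) + E₁²·c₁²/(4λ²·M₂²·([2]_q)²·L₂²). -/
open Complex Metric Set

noncomputable def taylorCoeff (h : ℂ → ℂ) (n : ℕ) : ℂ := iteratedDeriv n h 0 / (n.factorial : ℂ)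

noncomputable def Lcoef (q η : ℝ) (n : ℕ) : ℝ := symQ q (1 + η) / symQ q ((n : ℝ) + η)

noncomputable def Jop (q η : ℝ) (h : ℂ → ℂ) (z : ℂ) : ℂ :=
  ∑' n, (Lcoef q η n : ℂ) * taylorCoeff h n * z ^ n

noncomputable def Phi (q η lam mu : ℝ) (h : ℂ → ℂ) (z : ℂ) : ℂ :=
  (2 * z * Dq q (Jop q η h) z ^ (lam : ℂ) / (Jop q η h z - Jop q η h (-z))) ^ (mu : ℂ) *
    (2 * Dq q (fun ζ => ζ * Dq q (Jop q η h) ζ) z ^ (lam : ℂ) /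
        Dq q (fun ζ => Jop q η h ζ - Jop q η h (-ζ)) z) ^ ((1 - mu : ℝ) : ℂ)

noncomputable def M2v (q mu : ℝ) : ℝ := mu - (mu - 1) * symQ q 2
noncomputable def M3v (q mu : ℝ) : ℝ := mu - (mu - 1) * symQ q 3
noncomputable def N2v (q mu : ℝ) : ℝ := mu - (mu - 1) * symQ q 2 ^ 2

noncomputable def Omegav (q η lam mu : ℝ) : ℝ :=
  2 * (lam * symQ q 3 - 1) * M3v q mu * Lcoef q η 3 +
    lam * (lam * M2v q mu ^ 2 - N2v q mu) * symQ q 2 ^ 2 * Lcoef q η 2 ^ 2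

noncomputable def Thetav (q η lam mu E1 : ℝ) (E : ℕ → ℂ) : ℂ :=
  ((2 * (lam * symQ q 3 - 1) * M3v q mu * E1 ^ 2 * Lcoef q η 3 : ℝ) : ℂ) +
    (lam : ℂ) * (((lam * M2v q mu ^ 2 : ℝ) : ℂ) * (((E1 ^ 2 + 2 * E1 : ℝ) : ℂ) - 2 * E 2) -
        ((N2v q mu * E1 ^ 2 : ℝ) : ℂ)) * ((symQ q 2 ^ 2 * Lcoef q η 2 ^ 2 : ℝ) : ℂ)

noncomputable def Gammav (q η lam : ℝ) : ℝ :=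
  2 * (lam * symQ q 3 - 1) * Lcoef q η 3 + lam * (lam - 1) * symQ q 2 ^ 2 * Lcoef q η 2 ^ 2

noncomputable def Xiv (q η lam E1 : ℝ) (E : ℕ → ℂ) : ℂ :=
  ((2 * (lam * symQ q 3 - 1) * E1 ^ 2 * Lcoef q η 3 : ℝ) : ℂ) +
    (lam : ℂ) * ((((lam - 1) * E1 ^ 2 : ℝ) : ℂ) + 2 * (lam : ℂ) * ((E1 : ℂ) - E 2)) *
      ((symQ q 2 ^ 2 * Lcoef q η 2 ^ 2 : ℝ) : ℂ)

noncomputable def Psiv (q η lam : ℝ) : ℝ :=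
  2 * (lam * symQ q 3 - 1) * symQ q 3 * Lcoef q η 3 +
    lam * (lam - 1) * symQ q 2 ^ 4 * Lcoef q η 2 ^ 2

noncomputable def Upsv (q η lam E1 : ℝ) (E : ℕ → ℂ) : ℂ :=
  ((2 * (lam * symQ q 3 - 1) * symQ q 3 * E1 ^ 2 * Lcoef q η 3 : ℝ) : ℂ) +
    (lam : ℂ) * ((((lam - 1) * E1 ^ 2 : ℝ) : ℂ) + 2 * (lam : ℂ) * ((E1 : ℂ) - E 2)) *
      ((symQ q 2 ^ 4 * Lcoef q η 2 ^ 2 : ℝ) : ℂ)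

open Filter Topology Asymptotics

def Ex (F : ℂ → ℂ) (a0 a1 a2 : ℂ) : Prop :=
  (fun z => F z - (a0 + a1 * z + a2 * z ^ 2)) =o[𝓝[≠] (0 : ℂ)] (fun z => z ^ 2)

lemma Ex.congr {F G : ℂ → ℂ} {a0 a1 a2 : ℂ} (h : Ex F a0 a1 a2)
    (e : ∀ z, z ≠ 0 → F z = G z) : Ex G a0 a1 a2 := by
  refine IsLittleO.congr' h ?_ EventuallyEq.rfl
  filter_upwards [self_mem_nhdsWithin] with z hz
  rw [e z hz]

lemma Ex.congr' {F G : ℂ → ℂ} {a0 a1 a2 : ℂ} (h : Ex F a0 a1 a2)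
    (e : ∀ᶠ z in 𝓝 (0:ℂ), z ≠ 0 → F z = G z) : Ex G a0 a1 a2 := by
  refine IsLittleO.congr' h ?_ EventuallyEq.rfl
  filter_upwards [self_mem_nhdsWithin, nhdsWithin_le_nhds e] with z hz h2
  rw [h2 hz]

lemma Ex.add {F G : ℂ → ℂ} {a0 a1 a2 b0 b1 b2 : ℂ} (h : Ex F a0 a1 a2) (h' : Ex G b0 b1 b2) :
    Ex (fun z => F z + G z) (a0 + b0) (a1 + b1) (a2 + b2) := by
  refine (IsLittleO.add h h').congr_left fun z => ?_
  ring

lemma Ex.smul {F : ℂ → ℂ} {a0 a1 a2 : ℂ} (k : ℂ) (h : Ex F a0 a1 a2) :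
    Ex (fun z => k * F z) (k * a0) (k * a1) (k * a2) := by
  refine (IsLittleO.const_mul_left h k).congr_left fun z => ?_
  ring

lemma Ex.const (k : ℂ) : Ex (fun _ => k) k 0 0 := by
  refine (isLittleO_zero _ _).congr_left fun z => ?_
  simp

lemma tendsto_poly (a0 a1 a2 : ℂ) :
    Tendsto (fun z : ℂ => a0 + a1 * z + a2 * z ^ 2) (𝓝[≠] 0) (𝓝 a0) := by
  have : Continuous (fun z : ℂ => a0 + a1 * z + a2 * z ^ 2) := by fun_prop
  have h := this.tendsto 0
  simp only [mul_zero, add_zero, ne_eq, OfNat.ofNat_ne_zero, not_false_eq_true, zero_pow] at h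
  exact h.mono_left nhdsWithin_le_nhds

lemma tendsto_sq : Tendsto (fun z : ℂ => z ^ 2) (𝓝[≠] 0) (𝓝 0) := by
  simpa using tendsto_poly 0 0 1

lemma Ex.tendsto {F : ℂ → ℂ} {a0 a1 a2 : ℂ} (h : Ex F a0 a1 a2) :
    Tendsto F (𝓝[≠] 0) (𝓝 a0) := by
  have h1 : Tendsto (fun z => F z - (a0 + a1 * z + a2 * z ^ 2)) (𝓝[≠] (0 : ℂ)) (𝓝 0) :=
    IsLittleO.trans_tendsto h tendsto_sq
  simpa using h1.add (tendsto_poly a0 a1 a2)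

lemma Ex.mul {F G : ℂ → ℂ} {a0 a1 a2 b0 b1 b2 : ℂ} (h : Ex F a0 a1 a2) (h' : Ex G b0 b1 b2) :
    Ex (fun z => F z * G z) (a0 * b0) (a0 * b1 + a1 * b0) (a0 * b2 + a1 * b1 + a2 * b0) := by
  have e1 := IsLittleO.mul_isBigO h (h'.tendsto.isBigO_one ℂ)
  have e2 := IsBigO.mul_isLittleO ((tendsto_poly a0 a1 a2).isBigO_one ℂ) h'
  have e3 : (fun z : ℂ => z ^ 3 * (a1 * b2 + a2 * b1 + a2 * b2 * z)) =o[𝓝[≠] (0:ℂ)]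
      (fun z : ℂ => z ^ 2 * 1) := by
    apply IsLittleO.mul_isBigO
    · exact (isLittleO_pow_pow (by norm_num)).mono nhdsWithin_le_nhds
    · have := (tendsto_poly (a1 * b2 + a2 * b1) (a2 * b2) 0).isBigO_one ℂ
      simpa using this
  simp only [mul_one, one_mul] at e1 e2 e3
  refine ((e1.add e2).add e3).congr_left fun z => ?_
  ring

lemma Ex.isBigO {F : ℂ → ℂ} {a1 a2 : ℂ} (h : Ex F 0 a1 a2) :
    F =O[𝓝[≠] 0] (fun z => z) := by
  have h1 : (fun z => F z - (0 + a1 * z + a2 * z ^ 2)) =O[𝓝[≠] (0 : ℂ)] (fun z => z) :=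
    (IsLittleO.trans h ((isLittleO_pow_pow (m := 1) (n := 2) (by norm_num)).mono
      nhdsWithin_le_nhds)).isBigO.congr_right (by simp)
  have h2 : (fun z : ℂ => z * (a1 + a2 * z)) =O[𝓝[≠] (0 : ℂ)] (fun z => z * 1) := by
    apply (isBigO_refl _ _).mul
    simpa using (tendsto_poly a1 a2 0).isBigO_one ℂ
  simp only [mul_one] at h2
  refine (h1.add h2).congr_left fun z => ?_
  ring

lemma Ex.comp {F G : ℂ → ℂ} {a1 a2 b0 b1 b2 : ℂ} (hG0 : G 0 = b0) (hG : Ex G b0 b1 b2)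
    (h : Ex F 0 a1 a2) : Ex (fun z => G (F z)) b0 (b1 * a1) (b1 * a2 + b2 * a1 ^ 2) := by
  have hG' : (fun z => G z - (b0 + b1 * z + b2 * z ^ 2)) =o[𝓝 (0 : ℂ)] (fun z => z ^ 2) := by
    have := (isLittleO_insert (x := (0:ℂ)) (s := {0}ᶜ) (g := fun z => G z - (b0 + b1 * z + b2 * z ^ 2))
      (g' := fun z : ℂ => z ^ 2) (by simp [hG0])).2 hG
    have e : insert (0:ℂ) {0}ᶜ = Set.univ := by ext x; by_cases hx : x = 0 <;> simp [hx]
    rwa [e, nhdsWithin_univ] at this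
  have e1 := (hG'.comp_tendsto h.tendsto).trans_isBigO (h.isBigO.pow 2)
  have e2 := ((Ex.const b0).add (h.smul b1)).add ((h.mul h).smul b2)
  refine (IsLittleO.add e1 e2).congr_left fun z => ?_
  simp only [Function.comp]
  ring

lemma Ex.unique {F : ℂ → ℂ} {a0 a1 a2 b0 b1 b2 : ℂ} (h : Ex F a0 a1 a2) (h' : Ex F b0 b1 b2) :
    a0 = b0 ∧ a1 = b1 ∧ a2 = b2 := by
  have h0 : a0 = b0 := tendsto_nhds_unique h.tendsto h'.tendsto
  subst h0
  have hd : (fun z : ℂ => (b1 - a1) * z + (b2 - a2) * z ^ 2) =o[𝓝[≠] (0 : ℂ)]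
      (fun z => z ^ 2) := by
    refine (IsLittleO.sub h h').congr_left fun z => ?_
    ring
  have t2 := hd.tendsto_div_nhds_zero
  have t1 : Tendsto (fun z : ℂ => (b1 - a1) + (b2 - a2) * z) (𝓝[≠] (0:ℂ)) (𝓝 0) := by
    have := t2.mul (tendsto_poly 0 1 0)
    simp only [mul_zero] at this
    refine this.congr' ?_
    filter_upwards [self_mem_nhdsWithin] with z hz
    have : z ≠ 0 := hz
    field_simp
    ring
  have h1 : b1 - a1 = 0 := by
    have := tendsto_poly (b1 - a1) (b2 - a2) 0
    simp only [zero_mul, add_zero] at this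
    exact tendsto_nhds_unique this t1
  have h2 : b2 - a2 = 0 := by
    have t3 : Tendsto (fun z : ℂ => (b2 - a2)) (𝓝[≠] (0:ℂ)) (𝓝 0) := by
      refine t2.congr' ?_
      filter_upwards [self_mem_nhdsWithin] with z hz
      have : z ≠ 0 := hz
      rw [h1]
      field_simp
      ring
    exact tendsto_nhds_unique tendsto_const_nhds t3
  exact ⟨rfl, (sub_eq_zero.1 h1).symm, (sub_eq_zero.1 h2).symm⟩

lemma Ex.scale {F : ℂ → ℂ} {a0 a1 a2 : ℂ} (h : Ex F a0 a1 a2) (k : ℂ) (hk : k ≠ 0) :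
    Ex (fun z => F (k * z)) a0 (k * a1) (k ^ 2 * a2) := by
  have ht : Tendsto (fun z : ℂ => k * z) (𝓝[≠] 0) (𝓝[≠] 0) := by
    apply tendsto_nhdsWithin_of_tendsto_nhds_of_eventually_within
    · simpa using tendsto_poly 0 k 0
    · filter_upwards [self_mem_nhdsWithin] with z hz
      exact mul_ne_zero hk hz
  have e1 := (IsLittleO.comp_tendsto h ht)
  have e2 : (fun z : ℂ => k ^ 2 * z ^ 2) =O[𝓝[≠] (0:ℂ)] (fun z => z ^ 2) :=
    (isBigO_refl _ _).const_mul_left _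
  refine (e1.trans_isBigO (e2.congr_left fun z => ?_)).congr_left fun z => ?_
  · simp only [Function.comp]; ring
  · simp only [Function.comp]; ring

lemma ps_fps (c : ℕ → ℂ) (C r : ℝ) (hr : 0 < r) (hC : ∀ n, ‖c n‖ ≤ C * r ^ n) :
    HasFPowerSeriesAt (fun z => ∑' n, c n * z ^ n) (FormalMultilinearSeries.ofScalars ℂ c) 0 := by
  set p := FormalMultilinearSeries.ofScalars ℂ c with hp
  have hpos : 0 < p.radius := by
    have : ENNReal.ofNNReal (Real.toNNReal r⁻¹) ≤ p.radius := by
      apply p.le_radius_of_bound C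
      intro n
      rw [hp, FormalMultilinearSeries.ofScalars_norm, Real.coe_toNNReal _ (by positivity)]
      calc ‖c n‖ * (r⁻¹) ^ n ≤ C * r ^ n * (r⁻¹) ^ n := by gcongr; exact hC n
        _ = C := by rw [mul_assoc, ← mul_pow, mul_inv_cancel₀ hr.ne', one_pow, mul_one]
    refine lt_of_lt_of_le ?_ this
    rw [ENNReal.coe_pos, Real.toNNReal_pos]
    exact inv_pos.2 hr
  have := (p.hasFPowerSeriesOnBall hpos).hasFPowerSeriesAt
  have e : p.sum = (fun z => ∑' n, c n * z ^ n) := by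
    funext z
    simp [FormalMultilinearSeries.sum, hp, mul_comm]
  rwa [e] at this

lemma fps_ex {F : ℂ → ℂ} {c : ℕ → ℂ}
    (h : HasFPowerSeriesAt F (FormalMultilinearSeries.ofScalars ℂ c) 0) :
    Ex F (c 0) (c 1) (c 2) ∧ (c 0 = 0 → Ex (fun z => F z / z) (c 1) (c 2) (c 3)) := by
  constructor
  · have h3 := h.isBigO_sub_partialSum_pow 3
    have h4 : (fun y : ℂ => ‖y‖ ^ 3) =o[𝓝 0] (fun z : ℂ => z ^ 2) := by
      have := (isLittleO_pow_pow (𝕜 := ℂ) (m := 2) (n := 3) (by norm_num)).norm_left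
      simpa only [norm_pow] using this
    refine ((h3.trans_isLittleO h4).mono nhdsWithin_le_nhds).congr_left fun z => ?_
    simp [FormalMultilinearSeries.partialSum, Finset.sum_range_succ]
    ring
  · intro h0
    have h3 := h.isBigO_sub_partialSum_pow 4
    have h4 : (fun y : ℂ => ‖y‖ ^ 4) =o[𝓝 0] (fun z : ℂ => z ^ 3) := by
      have := (isLittleO_pow_pow (𝕜 := ℂ) (m := 3) (n := 4) (by norm_num)).norm_left
      simpa only [norm_pow] using this
    have h5 := ((h3.trans_isLittleO h4).mono nhdsWithin_le_nhds).mul_isBigO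
      (isBigO_refl (fun z : ℂ => z⁻¹) (𝓝[≠] (0:ℂ)))
    refine h5.congr' ?_ ?_
    · filter_upwards [self_mem_nhdsWithin] with z hz
      have : z ≠ 0 := hz
      simp [FormalMultilinearSeries.partialSum, Finset.sum_range_succ, h0]
      field_simp
    · filter_upwards [self_mem_nhdsWithin] with z hz
      have : z ≠ 0 := hz
      field_simp

lemma fps_taylor {F : ℂ → ℂ} (h : AnalyticAt ℂ F 0) :
    HasFPowerSeriesAt F (FormalMultilinearSeries.ofScalars ℂ (taylorCoeff F)) 0 :=
  h.hasFPowerSeriesAt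

lemma bound_of_summable (c : ℕ → ℂ) (z : ℂ) (hz : z ≠ 0) (h : Summable fun n => c n * z ^ n) :
    ∃ C r : ℝ, 0 < r ∧ ∀ n, ‖c n‖ ≤ C * r ^ n := by
  obtain ⟨C, hC⟩ := (h.tendsto_atTop_zero.norm).bddAbove_range
  refine ⟨C, ‖z‖⁻¹, by positivity, fun n => ?_⟩
  have := hC ⟨n, rfl⟩
  simp only [norm_mul, norm_pow] at this
  have hz' : 0 < ‖z‖ := by positivity
  rw [inv_pow, ← div_eq_mul_inv, le_div_iff₀ (by positivity)]
  exact this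

lemma ps_of_eq {F : ℂ → ℂ} {c : ℕ → ℂ} (h : ∀ z ∈ ball (0:ℂ) 1, F z = ∑' n, c n * z ^ n)
    (hne : F (1/2) ≠ 0) : HasFPowerSeriesAt F (FormalMultilinearSeries.ofScalars ℂ c) 0 := by
  have hm : (1/2 : ℂ) ∈ ball (0:ℂ) 1 := by simp; norm_num
  have hs : Summable fun n => c n * (1/2 : ℂ) ^ n := by
    by_contra hs
    exact hne (by rw [h _ hm, tsum_eq_zero_of_not_summable hs])
  obtain ⟨C, r, hr, hC⟩ := bound_of_summable c _ (by norm_num) hs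
  refine (ps_fps c C r hr hC).congr ?_
  filter_upwards [ball_mem_nhds (0:ℂ) one_pos] with z hz
  rw [h z hz]

noncomputable def tc (s : ℂ) : ℂ := taylorCoeff (fun w => (1 + w) ^ s) 2

lemma Ex.cpow {F : ℂ → ℂ} {a1 a2 : ℂ} (h : Ex F 1 a1 a2) (s : ℂ) :
    Ex (fun z => F z ^ s) 1 (s * a1) (s * a2 + tc s * a1 ^ 2) := by
  have hd : HasDerivAt (fun w : ℂ => (1 + w) ^ s) (s * (1 + 0) ^ (s - 1) * 1) 0 :=
    HasDerivAt.cpow_const ((hasDerivAt_id (0:ℂ)).const_add 1) (by simp)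
  have ha : AnalyticAt ℂ (fun w : ℂ => (1 + w) ^ s) 0 := by
    apply AnalyticAt.cpow (by fun_prop) (by fun_prop)
    simp
  have hG := (fps_ex (fps_taylor ha)).1
  have e0 : taylorCoeff (fun w : ℂ => (1 + w) ^ s) 0 = 1 := by simp [taylorCoeff]
  have e1 : taylorCoeff (fun w : ℂ => (1 + w) ^ s) 1 = s := by
    simp [taylorCoeff, hd.deriv]
  rw [e0, e1] at hG
  have h1 : Ex (fun z => -1 + F z) 0 a1 a2 := by
    simpa using (Ex.const (-1)).add h
  exact (Ex.comp (by simp) hG h1).congr fun z _ => by simp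

lemma Ex.inv2 {F : ℂ → ℂ} {b : ℂ} (h : Ex F 2 0 (2 * b)) :
    Ex (fun z => 2 / F z) 1 0 (-b) := by
  have h1 : Ex (fun z => 1/2 * F z) 1 0 b := by
    have := h.smul (1/2)
    convert this using 1 <;> ring
  have := h1.cpow (-1)
  simp only [cpow_neg_one] at this
  convert this using 1
  · funext z; rw [one_div, mul_inv, inv_inv]; rfl
  all_goals ring

lemma den_neg {q : ℝ} (hq0 : 0 < q) (hq1 : q < 1) : q - q⁻¹ < 0 := by
  have := (one_lt_inv₀ hq0).2 hq1
  linarith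

lemma symQ_pos {q : ℝ} (hq0 : 0 < q) (hq1 : q < 1) {x : ℝ} (hx : 0 < x) : 0 < symQ q x := by
  unfold symQ
  apply div_pos_of_neg_of_neg _ (den_neg hq0 hq1)
  have : q ^ x < q ^ (-x) := Real.rpow_lt_rpow_of_exponent_gt hq0 hq1 (by linarith)
  exact sub_neg.2 this

lemma symQ_mono {q : ℝ} (hq0 : 0 < q) (hq1 : q < 1) {x y : ℝ} (hx : x ≤ y) :
    symQ q x ≤ symQ q y := by
  unfold symQ
  apply div_le_div_of_nonpos_of_le (den_neg hq0 hq1).le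
  have h1 : q ^ y ≤ q ^ x := Real.rpow_le_rpow_of_exponent_ge hq0 hq1.le hx
  have h2 : q ^ (-x) ≤ q ^ (-y) := Real.rpow_le_rpow_of_exponent_ge hq0 hq1.le (by linarith)
  exact sub_le_sub h1 h2

lemma symQ_nat {q : ℝ} (hq0 : 0 < q) (n : ℕ) :
    symQ q (n : ℝ) = (q ^ n - (q⁻¹) ^ n) / (q - q⁻¹) := by
  have h1 : Real.rpow q (n : ℝ) = q ^ n := Real.rpow_natCast q n
  have h2 : Real.rpow q (-(n : ℝ)) = (q⁻¹) ^ n := by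
    have := Real.rpow_neg hq0.le (n : ℝ)
    rw [Real.rpow_natCast, ← inv_pow] at this
    exact this
  rw [symQ, h1, h2]

lemma symQ_three_gt {q : ℝ} (hq0 : 0 < q) (hq1 : q < 1) : 1 < symQ q 3 := by
  have h := symQ_nat hq0 3
  have hd := den_neg hq0 hq1
  push_cast at h
  rw [h]
  have e : (q ^ 3 - q⁻¹ ^ 3) / (q - q⁻¹) = q ^ 2 + 1 + q⁻¹ ^ 2 := by
    rw [div_eq_iff hd.ne]
    field_simp
    ring
  rw [e]
  have : 0 < q ^ 2 := by positivity
  have : 0 < q⁻¹ ^ 2 := by positivity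
  linarith

lemma Lcoef_pos {q η : ℝ} (hq0 : 0 < q) (hq1 : q < 1) (hη : -1 < η) (n : ℕ) (hn : 1 ≤ n) :
    0 < Lcoef q η n := by
  have : (1:ℝ) ≤ n := by exact_mod_cast hn
  exact div_pos (symQ_pos hq0 hq1 (by linarith)) (symQ_pos hq0 hq1 (by linarith))

lemma Lcoef_le {q η : ℝ} (hq0 : 0 < q) (hq1 : q < 1) (hη : -1 < η) (n : ℕ) (hn : 1 ≤ n) :
    Lcoef q η n ≤ 1 := by
  have : (1:ℝ) ≤ n := by exact_mod_cast hn
  unfold Lcoef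
  rw [div_le_one (symQ_pos hq0 hq1 (by linarith))]
  exact symQ_mono hq0 hq1 (by linarith)

lemma Lcoef_one {q η : ℝ} (hq0 : 0 < q) (hq1 : q < 1) (hη : -1 < η) :
    Lcoef q η 1 = 1 := by
  unfold Lcoef
  push_cast
  exact div_self (symQ_pos hq0 hq1 (by linarith)).ne'

lemma Ex.dq {q : ℝ} (hq0 : 0 < q) (hq1 : q < 1) {H : ℂ → ℂ} {p0 p1 p2 : ℂ}
    (h : Ex (fun z => H z / z) p0 p1 p2) :
    Ex (Dq q H) p0 ((symQ q 2 : ℝ) * p1) ((symQ q 3 : ℝ) * p2) := by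
  have hqc : (q : ℂ) ≠ 0 := by exact_mod_cast hq0.ne'
  have hd : (q : ℂ) - (q : ℂ)⁻¹ ≠ 0 := by exact_mod_cast (den_neg hq0 hq1).ne
  have s2 : ((symQ q 2 : ℝ) : ℂ) = ((q:ℂ) ^ 2 - ((q:ℂ)⁻¹) ^ 2) / ((q : ℂ) - (q : ℂ)⁻¹) := by
    have := symQ_nat hq0 2
    push_cast at this
    rw [this]; push_cast; rfl
  have s3 : ((symQ q 3 : ℝ) : ℂ) = ((q:ℂ) ^ 3 - ((q:ℂ)⁻¹) ^ 3) / ((q : ℂ) - (q : ℂ)⁻¹) := by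
    have := symQ_nat hq0 3
    push_cast at this
    rw [this]; push_cast; rfl
  have h1 := (h.scale (q : ℂ) hqc).smul ((q:ℂ) / ((q : ℂ) - (q : ℂ)⁻¹))
  have h2 := (h.scale (q : ℂ)⁻¹ (inv_ne_zero hqc)).smul (-(q:ℂ)⁻¹ / ((q : ℂ) - (q : ℂ)⁻¹))
  have h3 := h1.add h2
  rw [s2, s3]
  have h4 := h3.congr (G := Dq q H) (by
    intro z hz
    rw [Dq, if_neg hz]
    have e1 : z / (q:ℂ) = (q:ℂ)⁻¹ * z := by rw [div_eq_inv_mul]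
    rw [e1]
    generalize (q : ℂ) - (q : ℂ)⁻¹ = D at hd
    generalize H ((q:ℂ) * z) = X
    generalize H ((q:ℂ)⁻¹ * z) = Y
    field_simp
    ring)
  convert h4 using 1
  · rw [← add_mul, ← add_div, ← sub_eq_add_neg, div_self hd, one_mul]
  · ring
  · ring

lemma phi_ex (q lam mu : ℝ) (hq0 : 0 < q) (hq1 : q < 1) : ∃ X : ℂ, ∀ (η : ℝ) (h : ℂ → ℂ) (A B : ℂ),
    Ex (fun z => Jop q η h z / z) 1 A B →
    Ex (Phi q η lam mu h) 1 ((lam : ℂ) * (symQ q 2 : ℝ) * (M2v q mu : ℝ) * A)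
      (((lam : ℂ) * (symQ q 3 : ℝ) - 1) * (M3v q mu : ℝ) * B + X * A ^ 2) := by
  refine ⟨mu * tc lam * (symQ q 2 : ℝ) ^ 2 + tc mu * (lam * (symQ q 2 : ℝ)) ^ 2
    + (1 - mu) * tc lam * (symQ q 2 : ℝ) ^ 4
    + tc ((1 - mu : ℝ) : ℂ) * (lam * (symQ q 2 : ℝ) ^ 2) ^ 2
    + mu * (1 - mu) * lam ^ 2 * (symQ q 2 : ℝ) ^ 3, fun η h A B hJ => ?_⟩
  · set J := Jop q η h with hJdef
    have d1 := hJ.dq hq0 hq1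
    have d1' : Ex (fun z => (fun ζ => ζ * Dq q J ζ) z / z) 1 ((symQ q 2 : ℝ) * A)
        ((symQ q 3 : ℝ) * B) := d1.congr fun z hz => by field_simp
    have d2 := d1'.dq hq0 hq1
    have hs := hJ.scale (-1) (by norm_num)
    have d3 : Ex (fun z => (fun ζ => J ζ - J (-ζ)) z / z) 2 0 (2 * B) := by
      have := hJ.add hs
      convert this.congr (G := fun z => (fun ζ => J ζ - J (-ζ)) z / z) ?_ using 1
      · norm_num
      · ring
      · ring
      · intro z hz
        simp only [neg_mul, one_mul]
        field_simp
        ring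
    have d4 := d3.dq hq0 hq1
    have d4' : Ex (Dq q (fun ζ => J ζ - J (-ζ))) 2 0 (2 * ((symQ q 3 : ℝ) * B)) := by
      convert d4 using 1 <;> ring
    have P1 := ((d1.cpow (lam : ℂ)).mul d3.inv2)
    have P2 := ((d2.cpow (lam : ℂ)).mul d4'.inv2)
    simp only [mul_one, mul_zero, zero_add, add_zero] at P1 P2
    have R := (P1.cpow (mu : ℂ)).mul (P2.cpow ((1 - mu : ℝ) : ℂ))
    have R' := R.congr (G := Phi q η lam mu h) (by
      intro z hz
      rw [Phi, ← hJdef]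
      congr 2
      · rw [div_div_eq_mul_div]; ring
      · ring)
    convert R' using 1
    · ring
    · rw [M2v]; push_cast; ring
    · rw [M3v]
      push_cast
      ring

lemma jop_ex {q η : ℝ} (hq0 : 0 < q) (hq1 : q < 1) (hη : -1 < η) {h : ℂ → ℂ} {c : ℕ → ℂ}
    (ha : AnalyticAt ℂ h 0)
    (h0 : h 0 = 0) (hK : Ex (fun z => h z / z) 1 (c 2) (c 3)) :
    Ex (fun z => Jop q η h z / z) 1 ((Lcoef q η 2 : ℝ) * c 2) ((Lcoef q η 3 : ℝ) * c 3) := by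
  have hp := fps_taylor ha
  have t0 : taylorCoeff h 0 = 0 := by simp [taylorCoeff, h0]
  obtain ⟨t1, t2, t3⟩ := ((fps_ex hp).2 t0).unique hK
  obtain ⟨C, r, hC, hr, hb⟩ :=
    (FormalMultilinearSeries.ofScalars ℂ (taylorCoeff h)).le_mul_pow_of_radius_pos hp.radius_pos
  have hps := ps_fps (fun n => (Lcoef q η n : ℂ) * taylorCoeff h n) C r hr (by
    intro n
    rcases Nat.eq_zero_or_pos n with rfl | hn
    · simp only [t0, mul_zero, norm_zero]; positivity
    · have := hb n
      rw [FormalMultilinearSeries.ofScalars_norm] at this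
      rw [norm_mul, norm_real, Real.norm_of_nonneg (Lcoef_pos hq0 hq1 hη n hn).le]
      calc _ ≤ 1 * ‖taylorCoeff h n‖ := by gcongr; exact Lcoef_le hq0 hq1 hη n hn
        _ ≤ _ := by rw [one_mul]; exact this)
  have := (fps_ex hps).2 (by simp [t0])
  simp only [t1, t2, t3, Lcoef_one hq0 hq1 hη] at this
  simpa [Jop] using this

lemma u_ex {u φ : ℂ → ℂ} {c E : ℕ → ℂ} {E1 : ℝ} (hu : IsSchwarz u)
    (hc0 : c 0 = 1)
    (hc : ∀ z ∈ ball (0 : ℂ) 1, (1 + u z) / (1 - u z) = ∑' n, c n * z ^ n)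
    (hφ0 : φ 0 = 1) (hφre : ∀ z ∈ ball (0 : ℂ) 1, 0 < (φ z).re)
    (hφE : ∀ z ∈ ball (0 : ℂ) 1, φ z = ∑' n, E n * z ^ n)
    (hE0 : E 0 = 1) (hE1 : E 1 = (E1 : ℂ)) :
    Ex (fun z => φ (u z)) 1 (E1 * (c 1 / 2))
      (E1 * (c 2 / 2 - c 1 ^ 2 / 4) + E 2 * (c 1 / 2) ^ 2) := by
  have hm : (1/2 : ℂ) ∈ ball (0:ℂ) 1 := by simp; norm_num
  have hE := (fps_ex (ps_of_eq hφE (by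
    intro h; have := hφre _ hm; rw [h] at this; simp at this))).1
  rw [hE0, hE1] at hE
  obtain ⟨hua, hu0, hub⟩ := hu
  have hne : ∀ z ∈ ball (0:ℂ) 1, 1 - u z ≠ 0 := by
    intro z hz h
    have := hub z hz
    rw [← sub_eq_zero.1 h] at this
    simp at this
  have hne' : ∀ z ∈ ball (0:ℂ) 1, 1 + u z ≠ 0 := by
    intro z hz h
    have := hub z hz
    rw [(eq_neg_of_add_eq_zero_right h)] at this
    simp at this
  have hP := (fps_ex (ps_of_eq hc (div_ne_zero (hne' _ hm) (hne _ hm)))).1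
  rw [hc0] at hP
  have hU := (fps_ex (fps_taylor (hua 0 (by simp)))).1
  have e0 : taylorCoeff u 0 = 0 := by simp [taylorCoeff, hu0]
  rw [e0] at hU
  set u1 := taylorCoeff u 1
  set u2 := taylorCoeff u 2
  have l := (Ex.const 1).add hU
  have r := hP.mul ((Ex.const 1).add (hU.smul (-1)))
  have r' := r.congr' (G := fun z => 1 + u z) (by
    filter_upwards [ball_mem_nhds (0:ℂ) one_pos] with z hz _
    have := hne z hz
    rw [div_mul_eq_mul_div, div_eq_iff this]
    ring)
  obtain ⟨_, k1, k2⟩ := l.unique r'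
  have v1 : u1 = c 1 / 2 := by linear_combination k1 / 2
  have v2 : u2 = c 2 / 2 - c 1 ^ 2 / 4 := by
    rw [v1] at k2
    linear_combination k2 / 2
  rw [v1, v2] at hU
  exact Ex.comp hφ0 hE hU

lemma inv_ex {f g : ℂ → ℂ} {a : ℕ → ℂ} (hgf : ∀ᶠ z in nhds (0 : ℂ), g (f z) = z)
    (hg : AnalyticAt ℂ g 0) (hg0 : g 0 = 0)
    (hf : Ex f 0 1 (a 2)) (hF : Ex (fun z => f z / z) 1 (a 2) (a 3))  :
    Ex (fun z => g z / z) 1 (-a 2) (2 * a 2 ^ 2 - a 3) := by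
  have t0 : taylorCoeff g 0 = 0 := by simp [taylorCoeff, hg0]
  have hG := (fps_ex (fps_taylor hg)).2 t0
  set b1 := taylorCoeff g 1
  set b2 := taylorCoeff g 2
  set b3 := taylorCoeff g 3
  have hG' : Ex (fun z => if z = 0 then b1 else g z / z) b1 b2 b3 :=
    hG.congr fun z hz => by simp [hz]
  have hc := (Ex.comp (by simp) hG' hf).mul hF
  have hc' := hc.congr' (G := fun _ => 1) (by
    filter_upwards [hgf] with z hz hz0
    have : f z ≠ 0 := by
      intro h; rw [h, hg0] at hz; exact hz0 hz.symm
    simp only [if_neg this, hz]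
    field_simp)
  obtain ⟨k0, k1, k2⟩ := (Ex.const 1).unique hc'
  have w1 : b1 = 1 := by linear_combination -k0
  have w2 : b2 = -a 2 := by rw [w1] at k1; linear_combination -k1
  have w3 : b3 = 2 * a 2 ^ 2 - a 3 := by rw [w1, w2] at k2; linear_combination -k2
  rwa [w1, w2, w3] at hG

theorem a3_relations_bernardi
    (q : ℝ) (hq0 : 0 < q) (hq1 : q < 1)
    (f g : ℂ → ℂ) (a : ℕ → ℂ)
    (hf : AnalyticOnNhd ℂ f (ball 0 1)) (hf0 : f 0 = 0) (hf'0 : deriv f 0 = 1)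
    (hfa : ∀ z ∈ ball (0 : ℂ) 1, f z = ∑' n, a n * z ^ n)
    (ha0 : a 0 = 0) (ha1 : a 1 = 1)
    (hfinj : InjOn f (ball 0 1))
    (hg : AnalyticOnNhd ℂ g (ball 0 1)) (hg0 : g 0 = 0)
    (hginj : InjOn g (ball 0 1))
    (hgf : ∀ᶠ z in nhds (0 : ℂ), g (f z) = z)
    (φ : ℂ → ℂ) (E : ℕ → ℂ) (E1 : ℝ)
    (hφa : AnalyticOnNhd ℂ φ (ball 0 1)) (hφ0 : φ 0 = 1)
    (hφre : ∀ z ∈ ball (0 : ℂ) 1, 0 < (φ z).re)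
    (hφE : ∀ z ∈ ball (0 : ℂ) 1, φ z = ∑' n, E n * z ^ n)
    (hE0 : E 0 = 1) (hE1 : E 1 = (E1 : ℂ)) (hE1pos : 0 < E1)
    (lam : ℝ) (hlam : 1 ≤ lam)
    (η : ℝ) (hη : -1 < η)
    (mu : ℝ) (hmu : 0 ≤ mu)
    (u v : ℂ → ℂ) (hu : IsSchwarz u) (hv : IsSchwarz v)
    (hsubf : ∀ z ∈ ball (0 : ℂ) 1, z ≠ 0 → Phi q η lam mu f z = φ (u z))
    (hsubg : ∀ w ∈ ball (0 : ℂ) 1, w ≠ 0 → Phi q η lam mu g w = φ (v w))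
    (c d : ℕ → ℂ) (hc0 : c 0 = 1) (hd0 : d 0 = 1)
    (hc : ∀ z ∈ ball (0 : ℂ) 1, (1 + u z) / (1 - u z) = ∑' n, c n * z ^ n)
    (hd : ∀ w ∈ ball (0 : ℂ) 1, (1 + v w) / (1 - v w) = ∑' n, d n * w ^ n)
    :
    2 * ((lam : ℂ) * (symQ q 3 : ℂ) - 1) * (M3v q mu : ℂ) * (Lcoef q η 3 : ℂ) *
        (a 3 - a 2 ^ 2) = 1 / 2 * (E1 : ℂ) * (c 2 - d 2) ∧
      (M2v q mu ≠ 0 → M3v q mu ≠ 0 →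
        a 3 = (E1 : ℂ) * (c 2 - d 2) /
            (4 * ((lam : ℂ) * (symQ q 3 : ℂ) - 1) * (M3v q mu : ℂ) * (Lcoef q η 3 : ℂ)) +
          (E1 : ℂ) ^ 2 * c 1 ^ 2 /
            (4 * (lam : ℂ) ^ 2 * (M2v q mu : ℂ) ^ 2 * (symQ q 2 : ℂ) ^ 2 *
              (Lcoef q η 2 : ℂ) ^ 2)) := by
  have hm : (1/2 : ℂ) ∈ ball (0:ℂ) 1 := by simp; norm_num
  have h0m : (0 : ℂ) ∈ ball (0:ℂ) 1 := by simp
  have hfp := ps_of_eq hfa (by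
    intro h
    have := hfinj hm h0m (by rw [h, hf0])
    norm_num at this)
  have hf1 := (fps_ex hfp).1
  have hF := (fps_ex hfp).2 ha0
  rw [ha0, ha1] at hf1
  rw [ha1] at hF
  have hG := inv_ex hgf (hg 0 h0m) hg0 hf1 hF
  have JF := jop_ex hq0 hq1 hη (hf 0 h0m) hf0 hF
  have JG := jop_ex (c := fun n => if n = 2 then -a 2 else 2 * a 2 ^ 2 - a 3)
    hq0 hq1 hη (hg 0 h0m) hg0 (by simpa using hG)
  simp only [if_true, show (3:ℕ) ≠ 2 by norm_num, if_false] at JG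
  obtain ⟨X, hX⟩ := phi_ex q lam mu hq0 hq1
  have PF := (hX η f _ _ JF).congr' (G := fun z => φ (u z)) (by
    filter_upwards [ball_mem_nhds (0:ℂ) one_pos] with z hz h0 using hsubf z hz h0)
  have PG := (hX η g _ _ JG).congr' (G := fun z => φ (v z)) (by
    filter_upwards [ball_mem_nhds (0:ℂ) one_pos] with z hz h0 using hsubg z hz h0)
  obtain ⟨-, f1, f2⟩ := PF.unique (u_ex hu hc0 hc hφ0 hφre hφE hE0 hE1)
  obtain ⟨-, g1, g2⟩ := PG.unique (u_ex hv hd0 hd hφ0 hφre hφE hE0 hE1)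
  have hE1c : (E1 : ℂ) ≠ 0 := by exact_mod_cast hE1pos.ne'
  have hcd : d 1 = - c 1 := by
    have : (E1 : ℂ) * (d 1 + c 1) = 0 := by linear_combination -2 * f1 - 2 * g1
    rcases mul_eq_zero.1 this with h | h
    · exact absurd h hE1c
    · linear_combination h
  rw [hcd] at g2
  have main : 2 * ((lam : ℂ) * (symQ q 3 : ℂ) - 1) * (M3v q mu : ℂ) * (Lcoef q η 3 : ℂ) *
        (a 3 - a 2 ^ 2) = 1 / 2 * (E1 : ℂ) * (c 2 - d 2) := by
    linear_combination f2 - g2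
  refine ⟨main, fun hM2 hM3 => ?_⟩
  have n1 : (lam : ℂ) * (symQ q 3 : ℂ) - 1 ≠ 0 := by
    have h3 := symQ_three_gt hq0 hq1
    have : lam * symQ q 3 - 1 ≠ 0 := by nlinarith
    exact_mod_cast this
  have n2 : (M3v q mu : ℂ) ≠ 0 := by exact_mod_cast hM3
  have n3 : (Lcoef q η 3 : ℂ) ≠ 0 := by
    exact_mod_cast (Lcoef_pos hq0 hq1 hη 3 (by norm_num)).ne'
  have n4 : (Lcoef q η 2 : ℂ) ≠ 0 := by
    exact_mod_cast (Lcoef_pos hq0 hq1 hη 2 (by norm_num)).ne'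
  have n5 : (M2v q mu : ℂ) ≠ 0 := by exact_mod_cast hM2
  have n6 : (symQ q 2 : ℂ) ≠ 0 := by exact_mod_cast (symQ_pos hq0 hq1 two_pos).ne'
  have n7 : (lam : ℂ) ≠ 0 := by
    have : lam ≠ 0 := by linarith
    exact_mod_cast this
  have e1 : (E1 : ℂ) * (c 2 - d 2) /
            (4 * ((lam : ℂ) * (symQ q 3 : ℂ) - 1) * (M3v q mu : ℂ) * (Lcoef q η 3 : ℂ)) =
      a 3 - a 2 ^ 2 := by
    rw [div_eq_iff (by simp [n1, n2, n3, n4, n5, n6, n7])]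
    linear_combination -2 * main
  have e2 : (E1 : ℂ) ^ 2 * c 1 ^ 2 /
            (4 * (lam : ℂ) ^ 2 * (M2v q mu : ℂ) ^ 2 * (symQ q 2 : ℂ) ^ 2 *
              (Lcoef q η 2 : ℂ) ^ 2) = a 2 ^ 2 := by
    rw [div_eq_iff (by simp [n1, n2, n3, n4, n5, n6, n7])]
    have hsq := congrArg (fun x => x ^ 2) f1
    linear_combination -4 * hsq
  rw [e1, e2]
  ring
end
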